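/- Let p be an odd prime and n ≥ 1. Then ℚ_p^× / ⟨(ℚ_p^×)^{pⁿ}, q⟩ is cyclic of order pⁿ, generated by the class of 1+p, for any q ∈ ℚ_p^× with ord_p(q) ≥ 1 and p ∤ ord_p(q). -/

import Mathlib

/-!
The coprimality of `ord_p q` and `pⁿ` lets multiplication by `pⁿ`-th powers and powers of `q` move
every element of `ℚ_p^×` into `ℤ_p^×`, and makes `ℤ_p^×` meet `⟨(ℚ_p^×)^{pⁿ}, q⟩` exactly in
`(ℤ_p^×)^{pⁿ}`; so the quotient is `ℤ_p^× / (ℤ_p^×)^{pⁿ}`. By Hensel's lemma a unit is a `pⁿ`-th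
power as soon as it is one modulo `p^{2n+1}`. If `|u - 1|_p = 1/p`, for instance `u = 1 + p`, the
class of `u` in the finite group `(ℤ/p^{m+1})^×` has order `p^m`, hence generates a subgroup of
index `p - 1`, prime to `p`, and Bézout shows that `u` generates the group modulo `pⁿ`-th powers
and, when `m ≥ n`, has exact order `pⁿ` there.
-/

section CommGroup

variable {G : Type*} [CommGroup G] {N : ℕ}

variable (G N) in
/-- The subgroup `G^N` of `N`-th powers of a commutative group `G`. -/
def powSubgroup : Subgroup G := (powMonoidHom N).range

theorem mem_powSubgroup {x : G} : x ∈ powSubgroup G N ↔ ∃ y, y ^ N = x := Iff.rfl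

theorem pow_mem_powSubgroup (x : G) : x ^ N ∈ powSubgroup G N := ⟨x, rfl⟩

theorem zpow_mem_powSubgroup_of_dvd (g : G) {k : ℤ} (hk : (N : ℤ) ∣ k) :
    g ^ k ∈ powSubgroup G N := by
  obtain ⟨j, rfl⟩ := hk
  exact ⟨g ^ j, by simp [mul_comm (N : ℤ), zpow_mul]⟩

theorem map_powSubgroup_le {G' : Type*} [CommGroup G'] (f : G →* G') :
    (powSubgroup G N).map f ≤ powSubgroup G' N := by
  rintro _ ⟨_, ⟨y, rfl⟩, rfl⟩
  exact ⟨f y, (map_pow f y N).symm⟩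

theorem closure_range_pow_union_singleton (N : ℕ) (q : G) :
    Subgroup.closure ((Set.range fun x : G => x ^ N) ∪ {q}) =
      powSubgroup G N ⊔ Subgroup.zpowers q := by
  rw [Subgroup.closure_union, ← Subgroup.zpowers_eq_closure]
  exact congrArg (· ⊔ Subgroup.zpowers q) (powSubgroup G N).closure_eq

theorem sup_powSubgroup_eq_top {H : Subgroup G} (hH : H.index.Coprime N) :
    H ⊔ powSubgroup G N = ⊤ := by
  rw [Subgroup.eq_top_iff']
  intro x
  obtain ⟨a, b, hab⟩ := Nat.isCoprime_iff_coprime.mpr hH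
  have hx : x = (x ^ H.index) ^ a * (x ^ b) ^ N := by
    rw [← zpow_natCast, ← zpow_natCast, ← zpow_mul, ← zpow_mul, ← zpow_add, mul_comm, hab,
      zpow_one]
  rw [hx]
  exact Subgroup.mul_mem_sup (H.zpow_mem (H.pow_index_mem x) a) (pow_mem_powSubgroup _)

theorem dvd_of_zpow_mem_powSubgroup {g : G} (hg : (Subgroup.zpowers g).index.Coprime N)
    (hN : N ∣ orderOf g) {k : ℤ} (hk : g ^ k ∈ powSubgroup G N) : (N : ℤ) ∣ k := by
  obtain ⟨z, hz⟩ := mem_powSubgroup.mp hk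
  set d := (Subgroup.zpowers g).index
  obtain ⟨j, hj : g ^ j = z ^ d⟩ := (Subgroup.zpowers g).pow_index_mem z
  have hpow : g ^ (k * d) = g ^ (j * N) := by
    rw [zpow_mul, zpow_mul, ← hz, hj]
    simp only [zpow_natCast, ← pow_mul, mul_comm]
  have hsub : (N : ℤ) ∣ j * N - k * d :=
    (Int.natCast_dvd_natCast.mpr hN).trans (zpow_eq_zpow_iff_modEq.mp hpow).dvd
  have hmul : (N : ℤ) ∣ k * d := (Int.dvd_iff_dvd_of_dvd_sub hsub).mp (dvd_mul_left _ _)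
  exact (Nat.isCoprime_iff_coprime.mpr hg).symm.dvd_of_dvd_mul_right hmul

variable {v : G →* Multiplicative ℤ} {q : G}

theorem ker_sup_powSubgroup_sup_zpowers_eq_top (hq : IsCoprime (v q).toAdd (N : ℤ)) :
    v.ker ⊔ (powSubgroup G N ⊔ Subgroup.zpowers q) = ⊤ := by
  rw [Subgroup.eq_top_iff']
  intro x
  obtain ⟨a, b, hab⟩ := hq
  set c := (v x).toAdd with hc
  set h := (x ^ b) ^ N * q ^ (a * c) with hh
  have hker : x * h⁻¹ ∈ v.ker := by
    rw [MonoidHom.mem_ker, ← toAdd_eq_zero]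
    simp only [hh, map_mul, map_inv, map_pow, map_zpow, toAdd_mul, toAdd_inv, toAdd_pow,
      toAdd_zpow, ← hc, smul_eq_mul, nsmul_eq_mul]
    linear_combination (-c) * hab
  rw [← inv_mul_cancel_right x h]
  exact Subgroup.mul_mem_sup hker
    (Subgroup.mul_mem_sup (pow_mem_powSubgroup _) (Subgroup.zpow_mem_zpowers q _))

theorem exists_mem_ker_pow_eq (hN : N ≠ 0) (hq : IsCoprime (v q).toAdd (N : ℤ)) {x : G}
    (hx : x ∈ v.ker) (hxq : x ∈ powSubgroup G N ⊔ Subgroup.zpowers q) :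
    ∃ z ∈ v.ker, z ^ N = x := by
  obtain ⟨_, ⟨y, rfl⟩, _, ⟨m, rfl⟩, rfl⟩ := Subgroup.mem_sup.mp hxq
  have hval : N * (v y).toAdd + m * (v q).toAdd = 0 := by
    simpa using congrArg Multiplicative.toAdd hx
  obtain ⟨c, rfl⟩ : (N : ℤ) ∣ m :=
    hq.symm.dvd_of_dvd_mul_right ⟨-(v y).toAdd, by linear_combination hval⟩
  refine ⟨y * q ^ c, ?_, ?_⟩
  · have hmul : (N : ℤ) * ((v y).toAdd + c * (v q).toAdd) = 0 := by linear_combination hval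
    rw [MonoidHom.mem_ker, ← toAdd_eq_zero]
    simpa [hN] using hmul
  · simp [mul_pow, mul_comm (N : ℤ), zpow_mul]

end CommGroup

section Quotient

variable {G : Type*} [Group G] {H : Subgroup G} [H.Normal] {g : G}

theorem zpowers_mk_eq_top (hgen : Subgroup.zpowers g ⊔ H = ⊤) :
    Subgroup.zpowers (g : G ⧸ H) = ⊤ := by
  have hmap := congrArg (Subgroup.map (QuotientGroup.mk' H)) hgen
  rwa [Subgroup.map_sup, MonoidHom.map_zpowers, QuotientGroup.map_mk'_self, sup_bot_eq,
    Subgroup.map_top_of_surjective _ (QuotientGroup.mk'_surjective H)] at hmap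

theorem orderOf_mk_eq {N : ℕ} (hg : ∀ k : ℤ, g ^ k ∈ H ↔ (N : ℤ) ∣ k) :
    orderOf (g : G ⧸ H) = N := by
  refine Nat.dvd_right_iff_eq.mp fun k => ?_
  rw [orderOf_dvd_iff_pow_eq_one, ← QuotientGroup.mk_pow, QuotientGroup.eq_one_iff,
    ← zpow_natCast, hg, Int.natCast_dvd_natCast]

end Quotient

section PadicInt

variable {p : ℕ} [Fact p.Prime]

open Polynomial in
theorem exists_pow_eq_of_norm_pow_sub_lt {N : ℕ} {a w : ℤ_[p]} (ha : ‖a‖ = 1)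
    (haw : ‖a ^ N - w‖ < ‖(N : ℤ_[p])‖ ^ 2) : ∃ z : ℤ_[p], z ^ N = w := by
  have hderiv : ‖aeval a (derivative (X ^ N - C w))‖ = ‖(N : ℤ_[p])‖ := by
    simp [derivative_X_pow, ha]
  have heval : aeval a (X ^ N - C w) = a ^ N - w := by simp
  obtain ⟨z, hz, -⟩ := hensels_lemma (F := X ^ N - C w) (a := a) (by rwa [hderiv, heval])
  exact ⟨z, by simpa [sub_eq_zero] using hz⟩

theorem mem_powSubgroup_of_norm_pow_sub_lt {N : ℕ} {a : ℤ_[p]} {w : ℤ_[p]ˣ}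
    (haw : ‖a ^ N - w‖ < ‖(N : ℤ_[p])‖ ^ 2) : w ∈ powSubgroup ℤ_[p]ˣ N := by
  have hN : N ≠ 0 := by
    rintro rfl
    exact (norm_nonneg _).not_gt (by simpa using haw)
  have hlt : ‖a ^ N + -(w : ℤ_[p])‖ < ‖-(w : ℤ_[p])‖ := by
    rw [← sub_eq_add_neg, norm_neg, PadicInt.norm_units]
    exact haw.trans_le (pow_le_one₀ (norm_nonneg _) (PadicInt.norm_le_one _))
  have ha : ‖a‖ = 1 := by
    have hpow := PadicInt.norm_eq_of_norm_add_lt_right hlt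
    rwa [norm_neg, PadicInt.norm_units, norm_pow,
      pow_eq_one_iff_of_nonneg (norm_nonneg a) hN] at hpow
  obtain ⟨z, hz⟩ := exists_pow_eq_of_norm_pow_sub_lt ha haw
  obtain ⟨z, rfl⟩ := (isUnit_pow_iff hN).mp (hz ▸ w.isUnit)
  exact ⟨z, Units.ext hz⟩

variable (p) in
/-- Reduction `ℤ_p^× → (ℤ/p^m)^×` of `p`-adic units modulo `p^m`. -/
noncomputable def unitsModPow (m : ℕ) : ℤ_[p]ˣ →* (ZMod (p ^ m))ˣ :=
  Units.map (PadicInt.toZModPow m : ℤ_[p] →+* ZMod (p ^ m))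

theorem coe_unitsModPow (m : ℕ) (w : ℤ_[p]ˣ) :
    (unitsModPow p m w : ZMod (p ^ m)) = PadicInt.toZModPow m (w : ℤ_[p]) := rfl

theorem toZModPow_eq_iff_norm_sub_le {m : ℕ} {x y : ℤ_[p]} :
    PadicInt.toZModPow m x = PadicInt.toZModPow m y ↔ ‖x - y‖ ≤ (p : ℝ) ^ (-m : ℤ) := by
  rw [← sub_eq_zero, ← map_sub, ← RingHom.mem_ker, PadicInt.ker_toZModPow,
    PadicInt.norm_le_pow_iff_mem_span_pow]

theorem comap_unitsModPow_powSubgroup_le (n : ℕ) :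
    (powSubgroup _ (p ^ n)).comap (unitsModPow p (2 * n + 1)) ≤ powSubgroup ℤ_[p]ˣ (p ^ n) := by
  have hp : p.Prime := Fact.out
  rintro w ⟨y, hy : y ^ p ^ n = unitsModPow p (2 * n + 1) w⟩
  obtain ⟨a, ha⟩ := ZMod.ringHom_surjective (PadicInt.toZModPow (p := p) (2 * n + 1)) y
  have hclose : ‖a ^ p ^ n - w‖ ≤ (p : ℝ) ^ (-(2 * n + 1 : ℕ) : ℤ) := by
    rw [← toZModPow_eq_iff_norm_sub_le, map_pow, ha, ← coe_unitsModPow, ← hy,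
      Units.val_pow_eq_pow_val]
  have hlt : ‖a ^ p ^ n - w‖ < ‖((p ^ n : ℕ) : ℤ_[p])‖ ^ 2 := by
    refine hclose.trans_lt ?_
    rw [Nat.cast_pow, PadicInt.norm_p_pow, ← zpow_natCast, ← zpow_mul]
    exact zpow_lt_zpow_right₀ (mod_cast hp.one_lt) (by lia)
  exact mem_powSubgroup_of_norm_pow_sub_lt hlt

variable {u : ℤ_[p]ˣ}

theorem exists_eq_one_add_p_mul_unit (hu : ‖(u : ℤ_[p]) - 1‖ = (p : ℝ)⁻¹) :
    ∃ c : ℤ_[p]ˣ, (u : ℤ_[p]) = 1 + p * c := by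
  have hp : p.Prime := Fact.out
  obtain ⟨c, hc⟩ : (p : ℤ_[p]) ∣ u - 1 := by
    rw [← PadicInt.norm_lt_one_iff_dvd, hu]
    exact inv_lt_one_of_one_lt₀ (mod_cast hp.one_lt)
  have hcu : IsUnit c := by
    rw [hc, norm_mul, PadicInt.norm_p] at hu
    rw [PadicInt.isUnit_iff]
    exact (mul_eq_left₀ (inv_ne_zero (mod_cast hp.ne_zero))).mp hu
  exact ⟨hcu.unit, by rw [hcu.unit_spec, ← hc, add_sub_cancel]⟩

theorem orderOf_unitsModPow (hp2 : p ≠ 2) (hu : ‖(u : ℤ_[p]) - 1‖ = (p : ℝ)⁻¹) (m : ℕ) :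
    orderOf (unitsModPow p (m + 1) u) = p ^ m := by
  have hp : p.Prime := Fact.out
  have : NeZero (p ^ (m + 1)) := ⟨pow_ne_zero _ hp.ne_zero⟩
  obtain ⟨c, hc⟩ := exists_eq_one_add_p_mul_unit hu
  set a : ℕ := (PadicInt.toZModPow (m + 1) (c : ℤ_[p])).val
  have ha : (a : ZMod (p ^ (m + 1))) = PadicInt.toZModPow (m + 1) (c : ℤ_[p]) :=
    ZMod.natCast_zmod_val _
  have hpa : ¬ (p : ℤ) ∣ (a : ℤ) := by
    have hcop : a.Coprime (p ^ (m + 1)) :=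
      (ZMod.isUnit_iff_coprime _ _).mp (ha ▸ c.isUnit.map (PadicInt.toZModPow (m + 1)))
    rw [Int.natCast_dvd_natCast, ← hp.coprime_iff_not_dvd]
    exact (hcop.coprime_dvd_right (dvd_pow_self p m.succ_ne_zero)).symm
  rw [← ZMod.orderOf_one_add_mul_prime hp hp2 a hpa m, ← orderOf_units, coe_unitsModPow, hc,
    Int.cast_natCast, ha]
  simp

theorem index_zpowers_unitsModPow (hp2 : p ≠ 2) (hu : ‖(u : ℤ_[p]) - 1‖ = (p : ℝ)⁻¹) (m : ℕ) :
    (Subgroup.zpowers (unitsModPow p (m + 1) u)).index = p - 1 := by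
  have hp : p.Prime := Fact.out
  have : NeZero (p ^ (m + 1)) := ⟨pow_ne_zero _ hp.ne_zero⟩
  have hcard := (Subgroup.zpowers (unitsModPow p (m + 1) u)).card_mul_index
  rw [Nat.card_zpowers, orderOf_unitsModPow hp2 hu, Nat.card_eq_fintype_card,
    ZMod.card_units_eq_totient, Nat.totient_prime_pow_succ hp] at hcard
  exact Nat.eq_of_mul_eq_mul_left (pow_pos hp.pos m) hcard

theorem coprime_index_zpowers_unitsModPow (hp2 : p ≠ 2) (hu : ‖(u : ℤ_[p]) - 1‖ = (p : ℝ)⁻¹)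
    (m n : ℕ) : (Subgroup.zpowers (unitsModPow p (m + 1) u)).index.Coprime (p ^ n) := by
  have hp : 1 ≤ p := (Fact.out : p.Prime).one_le
  rw [index_zpowers_unitsModPow hp2 hu]
  exact ((Nat.coprime_self_sub_left hp).mpr (Nat.coprime_one_left p)).pow_right n

theorem zpowers_sup_powSubgroup_padicInt_units_eq_top (hp2 : p ≠ 2)
    (hu : ‖(u : ℤ_[p]) - 1‖ = (p : ℝ)⁻¹) (n : ℕ) :
    Subgroup.zpowers u ⊔ powSubgroup ℤ_[p]ˣ (p ^ n) = ⊤ := by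
  rw [Subgroup.eq_top_iff']
  intro w
  have hw : unitsModPow p (2 * n + 1) w ∈
      Subgroup.zpowers (unitsModPow p (2 * n + 1) u) ⊔ powSubgroup _ (p ^ n) := by
    rw [sup_powSubgroup_eq_top (coprime_index_zpowers_unitsModPow hp2 hu (2 * n) n)]
    exact Subgroup.mem_top _
  obtain ⟨_, ⟨k, rfl⟩, y, hy, hky⟩ := Subgroup.mem_sup.mp hw
  have hmem : (u ^ k)⁻¹ * w ∈ powSubgroup ℤ_[p]ˣ (p ^ n) := by
    apply comap_unitsModPow_powSubgroup_le
    rw [Subgroup.mem_comap, map_mul, map_inv, map_zpow, ← hky, inv_mul_cancel_left]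
    exact hy
  rw [← mul_inv_cancel_left (u ^ k) w]
  exact Subgroup.mul_mem_sup (Subgroup.zpow_mem_zpowers u k) hmem

theorem dvd_of_zpow_mem_powSubgroup_padicInt_units (hp2 : p ≠ 2)
    (hu : ‖(u : ℤ_[p]) - 1‖ = (p : ℝ)⁻¹) {n : ℕ} {k : ℤ}
    (hk : u ^ k ∈ powSubgroup ℤ_[p]ˣ (p ^ n)) : ((p ^ n : ℕ) : ℤ) ∣ k := by
  have hmem := map_powSubgroup_le (unitsModPow p (n + 1)) (Subgroup.mem_map_of_mem _ hk)
  rw [map_zpow] at hmem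
  exact dvd_of_zpow_mem_powSubgroup (coprime_index_zpowers_unitsModPow hp2 hu n n)
    (orderOf_unitsModPow hp2 hu n).symm.dvd hmem

end PadicInt

section Padic

variable {p : ℕ} [Fact p.Prime]

variable (p) in
/-- The valuation `ord_p : ℚ_p^× → ℤ` as a group homomorphism; the target is written
multiplicatively so that `ℤ_p^×` is its kernel. -/
noncomputable def padicUnitsValuation : ℚ_[p]ˣ →* Multiplicative ℤ where
  toFun x := Multiplicative.ofAdd (x : ℚ_[p]).valuation
  map_one' := by simp
  map_mul' x y := by simp [Padic.valuation_mul, ofAdd_add]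

variable (p) in
/-- The inclusion `ℤ_p^× → ℚ_p^×`. -/
noncomputable def padicIntUnitsInclusion : ℤ_[p]ˣ →* ℚ_[p]ˣ :=
  Units.map (algebraMap ℤ_[p] ℚ_[p])

theorem padicIntUnitsInclusion_injective : Function.Injective (padicIntUnitsInclusion p) :=
  Units.map_injective (FaithfulSMul.algebraMap_injective ℤ_[p] ℚ_[p])

theorem exists_padicIntUnitsInclusion_eq {x : ℚ_[p]ˣ} (hx : ‖(x : ℚ_[p])‖ = 1) :
    ∃ w, padicIntUnitsInclusion p w = x :=
  ⟨PadicInt.mkUnits hx, Units.ext rfl⟩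

theorem mem_ker_padicUnitsValuation {x : ℚ_[p]ˣ} :
    x ∈ (padicUnitsValuation p).ker ↔ ‖(x : ℚ_[p])‖ = 1 := by
  have hp : p.Prime := Fact.out
  rw [Padic.norm_eq_zpow_neg_valuation x.ne_zero,
    zpow_eq_one_iff_right₀ (Nat.cast_nonneg p) (mod_cast hp.one_lt.ne'), neg_eq_zero]
  rfl

theorem ker_padicUnitsValuation :
    (padicUnitsValuation p).ker = (padicIntUnitsInclusion p).range := by
  ext x
  rw [mem_ker_padicUnitsValuation]
  constructor
  · exact exists_padicIntUnitsInclusion_eq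
  · rintro ⟨w, rfl⟩
    exact PadicInt.norm_units w

variable {q : ℚ_[p]ˣ} {u : ℤ_[p]ˣ} {n : ℕ}

theorem isCoprime_padicUnitsValuation_pow (hq : ¬ (p : ℤ) ∣ (q : ℚ_[p]).valuation) (n : ℕ) :
    IsCoprime (padicUnitsValuation p q).toAdd ((p ^ n : ℕ) : ℤ) := by
  have hp : Prime (p : ℤ) := Nat.prime_iff_prime_int.mp Fact.out
  rw [Nat.cast_pow]
  exact (hp.coprime_iff_not_dvd.mpr hq).symm.pow_right

theorem zpowers_padicIntUnitsInclusion_sup_eq_top (hp2 : p ≠ 2)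
    (hq : ¬ (p : ℤ) ∣ (q : ℚ_[p]).valuation) (hu : ‖(u : ℤ_[p]) - 1‖ = (p : ℝ)⁻¹) (n : ℕ) :
    Subgroup.zpowers (padicIntUnitsInclusion p u) ⊔
      (powSubgroup ℚ_[p]ˣ (p ^ n) ⊔ Subgroup.zpowers q) = ⊤ := by
  have hker : (padicUnitsValuation p).ker ≤
      Subgroup.zpowers (padicIntUnitsInclusion p u) ⊔ powSubgroup ℚ_[p]ˣ (p ^ n) := by
    rw [ker_padicUnitsValuation, MonoidHom.range_eq_map,
      ← zpowers_sup_powSubgroup_padicInt_units_eq_top hp2 hu n, Subgroup.map_sup,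
      MonoidHom.map_zpowers]
    exact sup_le_sup_left (map_powSubgroup_le _) _
  rw [eq_top_iff, ← ker_sup_powSubgroup_sup_zpowers_eq_top (isCoprime_padicUnitsValuation_pow hq n),
    ← sup_assoc, ← sup_assoc]
  exact sup_le_sup_right (sup_le hker le_sup_right) _

theorem padicIntUnitsInclusion_zpow_mem_iff (hp2 : p ≠ 2)
    (hq : ¬ (p : ℤ) ∣ (q : ℚ_[p]).valuation) (hu : ‖(u : ℤ_[p]) - 1‖ = (p : ℝ)⁻¹) (k : ℤ) :
    padicIntUnitsInclusion p u ^ k ∈ powSubgroup ℚ_[p]ˣ (p ^ n) ⊔ Subgroup.zpowers q ↔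
      ((p ^ n : ℕ) : ℤ) ∣ k := by
  refine ⟨fun hk => ?_, fun hk => Subgroup.mem_sup_left (zpow_mem_powSubgroup_of_dvd _ hk)⟩
  have hker : padicIntUnitsInclusion p u ^ k ∈ (padicUnitsValuation p).ker := by
    rw [ker_padicUnitsValuation, ← map_zpow]
    exact ⟨u ^ k, rfl⟩
  have hN : p ^ n ≠ 0 := pow_ne_zero n (Fact.out : p.Prime).ne_zero
  obtain ⟨z, hz, hzk⟩ :=
    exists_mem_ker_pow_eq hN (isCoprime_padicUnitsValuation_pow hq n) hker hk
  obtain ⟨w, rfl⟩ := ker_padicUnitsValuation.le hz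
  rw [← map_pow, ← map_zpow] at hzk
  exact dvd_of_zpow_mem_powSubgroup_padicInt_units hp2 hu
    ⟨w, padicIntUnitsInclusion_injective hzk⟩

theorem exists_padicIntUnitsInclusion_eq_of_norm_sub_one {u : ℚ_[p]ˣ}
    (hu : ‖(u : ℚ_[p]) - 1‖ = (p : ℝ)⁻¹) :
    ∃ w : ℤ_[p]ˣ, padicIntUnitsInclusion p w = u ∧ ‖(w : ℤ_[p]) - 1‖ = (p : ℝ)⁻¹ := by
  have hlt : ‖(u : ℚ_[p]) + -1‖ < ‖(-1 : ℚ_[p])‖ := by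
    rw [← sub_eq_add_neg, hu, norm_neg, norm_one]
    exact inv_lt_one_of_one_lt₀ (mod_cast (Fact.out : p.Prime).one_lt)
  have hnorm : ‖(u : ℚ_[p])‖ = 1 := by
    rw [Padic.norm_eq_of_norm_add_lt_right hlt, norm_neg, norm_one]
  obtain ⟨w, rfl⟩ := exists_padicIntUnitsInclusion_eq hnorm
  exact ⟨w, rfl, hu⟩

end Padic

theorem padic_units_quotient_cyclic_general (p : ℕ) [Fact p.Prime] (hp : p ≠ 2) (n : ℕ)
    (q : ℚ_[p]ˣ) (hq : ¬ (p : ℤ) ∣ (q : ℚ_[p]).valuation)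
    (u : ℚ_[p]ˣ) (hu : ‖(u : ℚ_[p]) - 1‖ = (p : ℝ)⁻¹) :
    Nat.card (ℚ_[p]ˣ ⧸ Subgroup.closure
        ((Set.range fun x : ℚ_[p]ˣ => x ^ p ^ n) ∪ {q})) = p ^ n ∧
    ∀ x : ℚ_[p]ˣ ⧸ Subgroup.closure ((Set.range fun x : ℚ_[p]ˣ => x ^ p ^ n) ∪ {q}),
      x ∈ Subgroup.zpowers
        ((QuotientGroup.mk u : ℚ_[p]ˣ ⧸ Subgroup.closure
          ((Set.range fun x : ℚ_[p]ˣ => x ^ p ^ n) ∪ {q}))) := by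
  obtain ⟨w, rfl, hw⟩ := exists_padicIntUnitsInclusion_eq_of_norm_sub_one hu
  rw [closure_range_pow_union_singleton]
  have hgen := (Subgroup.eq_top_iff' _).mp
    (zpowers_mk_eq_top (zpowers_padicIntUnitsInclusion_sup_eq_top hp hq hw n))
  refine ⟨?_, hgen⟩
  rw [← orderOf_eq_card_of_forall_mem_zpowers hgen]
  exact orderOf_mk_eq (padicIntUnitsInclusion_zpow_mem_iff hp hq hw)

/-- Let `p` be an odd prime and `n ≥ 1`. For any `q ∈ ℚ_p^×` with `ord_p(q) ≥ 1` and
`p ∤ ord_p(q)`, the quotient `ℚ_p^× / ⟨(ℚ_p^×)^{pⁿ}, q⟩` is cyclic of order `pⁿ`, generated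
by the class of `1 + p`. -/
theorem padic_units_quotient_cyclic (p : ℕ) [Fact p.Prime] (hp : Odd p) (n : ℕ) (hn : 1 ≤ n)
    (q : ℚ_[p]ˣ) (hq1 : 1 ≤ (q : ℚ_[p]).valuation)
    (hq2 : ¬ ((p : ℤ) ∣ (q : ℚ_[p]).valuation))
    (u : ℚ_[p]ˣ) (hu : (u : ℚ_[p]) = 1 + p) :
    Nat.card (ℚ_[p]ˣ ⧸ Subgroup.closure
        ((Set.range fun x : ℚ_[p]ˣ => x ^ p ^ n) ∪ {q})) = p ^ n ∧
    ∀ x : ℚ_[p]ˣ ⧸ Subgroup.closure ((Set.range fun x : ℚ_[p]ˣ => x ^ p ^ n) ∪ {q}),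
      x ∈ Subgroup.zpowers
        ((QuotientGroup.mk u : ℚ_[p]ˣ ⧸ Subgroup.closure
          ((Set.range fun x : ℚ_[p]ˣ => x ^ p ^ n) ∪ {q}))) := by
  have hp2 : p ≠ 2 := by rintro rfl; exact Nat.not_odd_iff_even.mpr even_two hp
  exact padic_units_quotient_cyclic_general p hp2 n q hq2 u (by simp [hu])
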